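/- Let G be a finite connected simple interval graph with minimum degree δ(G) ≥ 2. Then diam(G) ≤ rc(G) ≤ diam(G) + 1. -/

import Mathlib

open SimpleGraph Set

/-- The predicate that an edge colouring `c` makes `G` rainbow connected: every pair of
vertices is joined by a path no two of whose edges receive the same colour. -/
def RainbowConnectedUnder {V : Type*} (G : SimpleGraph V) (c : Sym2 V → ℕ) : Prop :=
  ∀ u v : V, ∃ p : G.Walk u v, p.IsPath ∧ (p.edges.map c).Nodup

/-- The rainbow connection number of `G`: the least `n` such that some edge colouring
using colours `< n` makes `G` rainbow connected. -/
noncomputable def rc {V : Type*} (G : SimpleGraph V) : ℕ :=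
  sInf {n | ∃ c : Sym2 V → ℕ, (∀ e ∈ G.edgeSet, c e < n) ∧ RainbowConnectedUnder G c}

/-- Degree of a vertex (as the cardinality of its neighbour set). -/
noncomputable def deg {V : Type*} (G : SimpleGraph V) (v : V) : ℕ := (G.neighborSet v).ncard

/-- `D` is a dominating set of `G`. -/
def IsDominatingSet {V : Type*} (G : SimpleGraph V) (D : Set V) : Prop :=
  ∀ v : V, v ∈ D ∨ ∃ u ∈ D, G.Adj u v

/-- The connected domination number of `G`. -/
noncomputable def connDomNum {V : Type*} (G : SimpleGraph V) : ℕ :=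
  sInf {n | ∃ D : Set V, D.ncard = n ∧ IsDominatingSet G D ∧ (G.induce D).Connected}

/-- Distance of a vertex `v` to a set of vertices `D`. -/
noncomputable def distSet {V : Type*} (G : SimpleGraph V) (D : Set V) (v : V) : ℕ :=
  sInf ((fun u => G.dist u v) '' D)

/-- Diameter of `G`. -/
noncomputable def graphDiam {V : Type*} (G : SimpleGraph V) : ℕ :=
  sSup (Set.range fun p : V × V => G.dist p.1 p.2)

/-- Eccentricity of a vertex. -/
noncomputable def ecc {V : Type*} (G : SimpleGraph V) (v : V) : ℕ :=
  sSup (Set.range fun u => G.dist v u)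

/-- Radius of `G`. -/
noncomputable def graphRadius {V : Type*} (G : SimpleGraph V) : ℕ :=
  sInf (Set.range fun v => ecc G v)

/-- `G` is an interval graph: vertices can be assigned nonempty closed real intervals such
that two distinct vertices are adjacent iff their intervals intersect. -/
def IsIntervalGraph {V : Type*} (G : SimpleGraph V) : Prop :=
  ∃ a b : V → ℝ, (∀ v, a v ≤ b v) ∧
    ∀ u v : V, u ≠ v → (G.Adj u v ↔ (Set.Icc (a u) (b u) ∩ Set.Icc (a v) (b v)).Nonempty)

/-- `G` is a unit interval graph. -/
def IsUnitIntervalGraph {V : Type*} (G : SimpleGraph V) : Prop :=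
  ∃ a : V → ℝ,
    ∀ u v : V, u ≠ v →
      (G.Adj u v ↔ (Set.Icc (a u) (a u + 1) ∩ Set.Icc (a v) (a v + 1)).Nonempty)

/-- `G` is a circular arc graph: vertices can be assigned nonempty closed arcs of a circle
(images of closed intervals in `AddCircle 1`) such that two distinct vertices are adjacent
iff their arcs intersect. -/
def IsCircularArcGraph {V : Type*} (G : SimpleGraph V) : Prop :=
  ∃ a b : V → ℝ, (∀ v, a v ≤ b v) ∧
    ∀ u v : V, u ≠ v → (G.Adj u v ↔
      (((fun x : ℝ => (x : AddCircle (1:ℝ))) '' Set.Icc (a u) (b u)) ∩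
        ((fun x : ℝ => (x : AddCircle (1:ℝ))) '' Set.Icc (a v) (b v))).Nonempty)

/-- There is a path from `x` to `y` avoiding the closed neighbourhood of `z`. -/
def HasAvoidingPath {V : Type*} (G : SimpleGraph V) (x y z : V) : Prop :=
  ∃ p : G.Walk x y, p.IsPath ∧ ∀ w ∈ p.support, w ≠ z ∧ ¬ G.Adj z w

/-- `G` is AT-free: it has no asteroidal triple. -/
def IsATFree {V : Type*} (G : SimpleGraph V) : Prop :=
  ¬ ∃ x y z : V, x ≠ y ∧ y ≠ z ∧ x ≠ z ∧ ¬G.Adj x y ∧ ¬G.Adj y z ∧ ¬G.Adj x z ∧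
    HasAvoidingPath G x y z ∧ HasAvoidingPath G y z x ∧ HasAvoidingPath G x z y

/-- `G` is a threshold graph. -/
def IsThresholdGraph {V : Type*} (G : SimpleGraph V) : Prop :=
  ∃ (w : V → ℝ) (t : ℝ), ∀ u v : V, u ≠ v → (G.Adj u v ↔ t ≤ w u + w v)

/-- `G` is a chain graph: bipartite with the neighbourhoods of one side linearly ordered
by inclusion. -/
def IsChainGraph {V : Type*} (G : SimpleGraph V) : Prop :=
  ∃ A B : Set V, A ∪ B = Set.univ ∧ Disjoint A B ∧
    (∀ u v : V, G.Adj u v → ¬(u ∈ A ∧ v ∈ A) ∧ ¬(u ∈ B ∧ v ∈ B)) ∧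
    ∀ a₁ ∈ A, ∀ a₂ ∈ A,
      G.neighborSet a₁ ⊆ G.neighborSet a₂ ∨ G.neighborSet a₂ ⊆ G.neighborSet a₁

/-- `G` is chordal: it has no induced cycle of length greater than 3. -/
def IsChordal {V : Type*} (G : SimpleGraph V) : Prop :=
  ∀ n : ℕ, 4 ≤ n → IsEmpty (SimpleGraph.cycleGraph n ↪g G)

/-!
For the lower bound, a rainbow path from `u` to `v` uses at least `dist u v` colours.

For the upper bound, let `D` be a connected dominating set. A spanning tree of `G[D]` with all its
edges coloured differently shows that `G[D]` needs at most `|D| - 1` colours. Since every vertex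
outside `D` has a second neighbour, three further colours suffice for `G`: colour the edges between
`D` and its complement with `0` and `1`, and those outside `D` with `2`, so that every vertex
outside `D` reaches `D` by one edge of colour `i ∈ {0, 1}`, and also by a walk avoiding colour `i`
with colours in `{0, 1, 2}`. Any two vertices can then reach `D` with disjoint sets of colours, so
`rc G` is at most the connected domination number plus two.

In an interval graph that is not complete, take a geodesic from the vertex `u` whose interval ends
first to the vertex `v` whose interval starts last. The intervals of its inner vertices overlap
consecutively from the end of `u` to the start of `v`, hence meet every interval: the inner
vertices form a connected dominating set of at most `diam G - 1` vertices.
-/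

section RainbowReachable

variable {V W α β : Type*}

/-- `u` and `v` are joined by a walk whose edges carry pairwise distinct colours, all of them in
`S`. Walks rather than paths, so that connections using disjoint sets of colours concatenate;
shortcutting a walk to a path keeps its colours distinct. -/
def RainbowReachable (G : SimpleGraph V) (c : Sym2 V → α) (S : Set α) (u v : V) : Prop :=
  ∃ p : G.Walk u v, (p.edges.map c).Nodup ∧ ∀ e ∈ p.edges, c e ∈ S

namespace RainbowReachable

variable {G : SimpleGraph V} {c : Sym2 V → α} {S T : Set α} {u v w : V}

lemma refl (u : V) : RainbowReachable G c S u u :=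
  ⟨.nil, by simp, by simp⟩

lemma of_adj (h : G.Adj u v) (hS : c s(u, v) ∈ S) : RainbowReachable G c S u v :=
  ⟨.cons h .nil, by simp, by simpa using hS⟩

lemma mono (h : RainbowReachable G c S u v) (hST : S ⊆ T) : RainbowReachable G c T u v :=
  let ⟨p, hp, hpS⟩ := h
  ⟨p, hp, fun e he => hST (hpS e he)⟩

lemma symm (h : RainbowReachable G c S u v) : RainbowReachable G c S v u :=
  let ⟨p, hp, hpS⟩ := h
  ⟨p.reverse, by simpa using hp, by simpa using hpS⟩

lemma trans (huv : RainbowReachable G c S u v) (hvw : RainbowReachable G c T v w)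
    (hST : Disjoint S T) : RainbowReachable G c (S ∪ T) u w := by
  obtain ⟨p, hp, hpS⟩ := huv
  obtain ⟨q, hq, hqT⟩ := hvw
  refine ⟨p.append q, ?_, ?_⟩
  · rw [Walk.edges_append, List.map_append, List.nodup_append']
    refine ⟨hp, hq, ?_⟩
    simp only [List.disjoint_left, List.mem_map, not_exists, not_and]
    rintro _ ⟨e, he, rfl⟩ e' he' heq
    exact hST.ne_of_mem (hpS e he) (hqT e' he') heq.symm
  · simp only [Walk.edges_append, List.mem_append]
    exact fun e he => he.imp (hpS e) (hqT e)

lemma map {H : SimpleGraph W} {c' : Sym2 W → β} {φ : α → β} (f : G →g H)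
    (hφ : Function.Injective φ) (hc : ∀ e, c' (e.map f) = φ (c e))
    (h : RainbowReachable G c S u v) : RainbowReachable H c' (φ '' S) (f u) (f v) := by
  obtain ⟨p, hp, hpS⟩ := h
  refine ⟨p.map f, ?_, ?_⟩
  · have hcolours : (p.map f).edges.map c' = (p.edges.map c).map φ := by
      simp [Walk.edges_map, hc]
    exact hcolours ▸ hp.map hφ
  · simp only [Walk.edges_map, List.mem_map, forall_exists_index, and_imp]
    rintro _ e he rfl
    exact hc e ▸ mem_image_of_mem φ (hpS e he)

lemma exists_isPath (h : RainbowReachable G c S u v) :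
    ∃ p : G.Walk u v, p.IsPath ∧ (p.edges.map c).Nodup := by
  classical
  obtain ⟨p, hp, -⟩ := h
  have hinj := List.inj_on_of_nodup_map hp
  refine ⟨p.bypass, p.bypass_isPath, p.bypass_isPath.isTrail.edges_nodup.map_on ?_⟩
  exact fun e he e' he' =>
    hinj (p.edges_bypass_subset_edges he) (p.edges_bypass_subset_edges he')

end RainbowReachable

lemma RainbowConnectedUnder.rainbowReachable {G : SimpleGraph V} {c : Sym2 V → ℕ}
    (h : RainbowConnectedUnder G c) (u v : V) : RainbowReachable G c univ u v :=
  let ⟨p, _, hp⟩ := h u v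
  ⟨p, hp, fun _ _ => mem_univ _⟩

end RainbowReachable

section RainbowColorable

variable {V : Type*}

/-- `G` is made rainbow connected by some edge colouring with colours `< n`, so that `rc G` is
the least such `n`. -/
def RainbowColorable (G : SimpleGraph V) (n : ℕ) : Prop :=
  ∃ c : Sym2 V → ℕ, (∀ e ∈ G.edgeSet, c e < n) ∧ RainbowConnectedUnder G c

variable {G H : SimpleGraph V} {n : ℕ}

lemma RainbowColorable.rc_le (h : RainbowColorable G n) : rc G ≤ n :=
  Nat.sInf_le h

lemma RainbowColorable.dist_le (h : RainbowColorable G n) (u v : V) : G.dist u v ≤ n := by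
  obtain ⟨c, hcn, hc⟩ := h
  obtain ⟨p, -, hp⟩ := hc u v
  have hsub : p.edges.map c ⊆ List.range n := by
    intro k hk
    obtain ⟨e, he, rfl⟩ := List.mem_map.1 hk
    exact List.mem_range.2 (hcn e (p.edges_subset_edgeSet he))
  calc G.dist u v ≤ p.length := SimpleGraph.dist_le p
    _ = (p.edges.map c).length := by rw [List.length_map, Walk.length_edges]
    _ ≤ (List.range n).length := (hp.subperm hsub).length_le
    _ = n := List.length_range

lemma RainbowColorable.mono (hGH : G ≤ H) (h : RainbowColorable G n) : RainbowColorable H n := by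
  have hdist := h.dist_le
  obtain ⟨c, hcn, hc⟩ := h
  refine ⟨fun e => if c e < n then c e else 0, ?_, fun u v => ?_⟩
  · intro e he
    induction e with | _ u v
    obtain ⟨p, -, -⟩ := hc u v
    have hn : 0 < n := (p.reachable.pos_dist_of_ne (H.ne_of_adj he)).trans_le (hdist u v)
    dsimp only
    split_ifs with hlt
    exacts [hlt, hn]
  · obtain ⟨p, hp, hpc⟩ := hc u v
    refine ⟨p.mapLe hGH, hp.mapLe hGH, ?_⟩
    rw [Walk.edges_mapLe_eq_edges]
    convert hpc using 1
    exact List.map_congr_left fun e he => if_pos (hcn e (p.edges_subset_edgeSet he))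

lemma rainbowColorable_card_edgeFinset [Fintype G.edgeSet] (hG : G.Connected) :
    RainbowColorable G G.edgeFinset.card := by
  classical
  let c : Sym2 V → ℕ := fun e => G.edgeFinset.toList.idxOf e
  refine ⟨c, fun e he => ?_, fun u v => ?_⟩
  · rw [← Finset.length_toList]
    exact List.idxOf_lt_length_of_mem (by simpa using he)
  · obtain ⟨p, hp⟩ := hG.exists_isPath u v
    refine ⟨p, hp, hp.isTrail.edges_nodup.map_on fun e he e' _ heq => ?_⟩
    exact (List.idxOf_inj (by simpa using p.edges_subset_edgeSet he)).1 heq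

lemma rainbowColorable_card_sub_one [Finite V] (hG : G.Connected) :
    RainbowColorable G (Nat.card V - 1) := by
  classical
  have := Fintype.ofFinite V
  obtain ⟨T, hTG, hT⟩ := hG.exists_isTree_le
  have hcard : T.edgeFinset.card = Nat.card V - 1 := by
    have := hT.card_edgeFinset
    rw [Nat.card_eq_fintype_card]
    lia
  exact (hcard ▸ rainbowColorable_card_edgeFinset hT.connected).mono hTG

lemma rainbowColorable_rc [Finite V] (hG : G.Connected) : RainbowColorable G (rc G) :=
  Nat.sInf_mem (s := {n | RainbowColorable G n}) ⟨_, rainbowColorable_card_sub_one hG⟩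

lemma rainbowColorable_top_one : RainbowColorable (⊤ : SimpleGraph V) 1 := by
  refine ⟨fun _ => 0, fun _ _ => Nat.one_pos, fun u v => ?_⟩
  obtain rfl | huv := eq_or_ne u v
  · exact (RainbowReachable.refl (S := univ) u).exists_isPath
  · exact (RainbowReachable.of_adj huv (mem_univ _)).exists_isPath

lemma dist_le_graphDiam [Finite V] (u v : V) : G.dist u v ≤ graphDiam G :=
  le_csSup (finite_range _).bddAbove ⟨(u, v), rfl⟩

lemma graphDiam_le_rc [Finite V] (hG : G.Connected) : graphDiam G ≤ rc G := by
  have := hG.nonempty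
  refine csSup_le (range_nonempty _) ?_
  rintro _ ⟨⟨u, v⟩, rfl⟩
  exact (rainbowColorable_rc hG).dist_le u v

end RainbowColorable

section DominatingSet

variable {V : Type*} {G : SimpleGraph V} {D : Set V}

lemma IsDominatingSet.exists_adj_of_notMem (hD : IsDominatingSet G D) {v : V} (hv : v ∉ D) :
    ∃ u ∈ D, G.Adj v u :=
  let ⟨u, hu, huv⟩ := (hD v).resolve_left hv
  ⟨u, hu, huv.symm⟩

lemma rainbowConnectedUnder_of_reachable_two_ways {c : Sym2 V → ℕ} {S T : Set ℕ}
    (hST : Disjoint S T) (hD : ∀ u ∈ D, ∀ v ∈ D, RainbowReachable G c T u v)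
    (hS : ∀ v, ∃ i ∈ S, (∃ d ∈ D, RainbowReachable G c {i} v d) ∧
      ∃ d ∈ D, RainbowReachable G c (S \ {i}) v d) :
    RainbowConnectedUnder G c := by
  have connect {A B : Set ℕ} (hA : A ⊆ S) (hB : B ⊆ S) (hAB : Disjoint A B) {u v : V}
      (hu : ∃ d ∈ D, RainbowReachable G c A u d) (hv : ∃ d ∈ D, RainbowReachable G c B v d) :
      ∃ p : G.Walk u v, p.IsPath ∧ (p.edges.map c).Nodup := by
    obtain ⟨d, hd, hud⟩ := hu
    obtain ⟨d', hd', hvd'⟩ := hv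
    refine ((hud.trans (hD d hd d' hd') (hST.mono_left hA)).trans hvd'.symm ?_).exists_isPath
    exact disjoint_union_left.2 ⟨hAB, (hST.mono_left hB).symm⟩
  intro u v
  obtain ⟨i, hi, hui, -⟩ := hS u
  obtain ⟨j, hj, hvj, hvS⟩ := hS v
  have hi' : {i} ⊆ S := singleton_subset_iff.2 hi
  obtain rfl | hij := eq_or_ne i j
  · exact connect hi' sdiff_subset disjoint_sdiff_right hui hvS
  · exact connect hi' (singleton_subset_iff.2 hj) (disjoint_singleton.2 hij) hui hvj

/-- `X` is a colour class of a proper 2-colouring of a spanning forest. -/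
lemma exists_set_forall_exists_adj_mem_iff_notMem (G : SimpleGraph V) :
    ∃ X : Set V, ∀ v w, G.Adj v w → ∃ w', G.Adj v w' ∧ (w' ∈ X ↔ v ∉ X) := by
  obtain ⟨F, hFG, hF, hreach⟩ := G.exists_isAcyclic_reachable_eq_le
  obtain ⟨C⟩ := hF.colorable_two
  refine ⟨{v | C v = 0}, fun v w hvw => ?_⟩
  obtain ⟨p⟩ : F.Reachable v w := hreach ▸ hvw.reachable
  have hadj : F.Adj v p.snd := p.adj_snd (Walk.not_nil_of_ne hvw.ne)
  refine ⟨p.snd, hFG hadj, ?_⟩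
  have hne := C.valid hadj
  simp only [mem_ofPred_eq]
  lia

/-- Edges between `D` and its complement get one colour if in `Z` and another if not. Then every
`v ∉ D` has two routes into `D`, one direct and one with at most one further vertex, that enter `D`
by edges of different colours. -/
lemma IsDominatingSet.exists_two_way_edges (hD : IsDominatingSet G D)
    (hnbr : ∀ v ∉ D, (G.neighborSet v).Nontrivial) :
    ∃ Z : Set (Sym2 V), ∀ v ∉ D, ∃ u ∈ D, ∃ w ∉ D, ∃ u' ∈ D, G.Adj v u ∧
      (v = w ∨ G.Adj v w) ∧ G.Adj w u' ∧ (s(v, u) ∈ Z ↔ s(w, u') ∉ Z) := by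
  classical
  choose! g hgD hg using fun v (hv : v ∉ D) => hD.exists_adj_of_notMem hv
  obtain ⟨X, hX⟩ := exists_set_forall_exists_adj_mem_iff_notMem (G.induce Dᶜ).spanningCoe
  let Z : Set (Sym2 V) :=
    {e | ∃ v ∈ e, v ∉ D ∧ if G.neighborSet v ⊆ D then e = s(v, g v) else v ∈ X}
  have mem_Z {v u : V} (hv : v ∉ D) (hu : u ∈ D) : s(v, u) ∈ Z ↔
      if G.neighborSet v ⊆ D then s(v, u) = s(v, g v) else v ∈ X := by
    simp [Z, hv, hu]
  refine ⟨Z, fun v hv => ⟨g v, hgD v hv, ?_⟩⟩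
  by_cases hvD : G.neighborSet v ⊆ D
  · obtain ⟨u, hu, hne⟩ := (hnbr v hv).exists_ne (g v)
    refine ⟨v, hv, u, hvD hu, hg v hv, .inl rfl, hu, ?_⟩
    rw [mem_Z hv (hgD v hv), mem_Z hv (hvD hu), if_pos hvD, if_pos hvD]
    exact iff_of_true rfl (mt Sym2.congr_right.1 hne)
  · obtain ⟨w, hvw, hw⟩ := not_subset.1 hvD
    obtain ⟨w', hvw', hX'⟩ := hX v w (by simpa [hv, hw] using hvw)
    obtain ⟨hadj, -, hw'⟩ : G.Adj v w' ∧ v ∉ D ∧ w' ∉ D := by simpa using hvw'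
    have hw'D : ¬ G.neighborSet w' ⊆ D := fun h => hv (h hadj.symm)
    refine ⟨w', hw', g w', hgD w' hw', hg v hv, .inr hadj, hg w' hw', ?_⟩
    rw [mem_Z hv (hgD v hv), mem_Z hw' (hgD w' hw'), if_neg hvD, if_neg hw'D]
    tauto

open Classical in
/-- The edge colouring of `G` built from a colouring `c` of `G[D]`: colours inside `D` are shifted
by `3`, edges avoiding `D` get `2`, and edges leaving `D` get `0` or `1` according to whether they
lie in `Z`. -/
noncomputable def dominatedColouring (D : Set V) (Z : Set (Sym2 V)) (c : Sym2 D → ℕ) :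
    Sym2 V → ℕ :=
  Function.extend (Sym2.map (↑)) (fun e => c e + 3)
    fun e => if ∀ v ∈ e, v ∉ D then 2 else if e ∈ Z then 0 else 1

section dominatedColouring

variable {Z : Set (Sym2 V)} {c : Sym2 D → ℕ} {u v w : V}

lemma dominatedColouring_map (e : Sym2 D) :
    dominatedColouring D Z c (e.map (↑)) = c e + 3 :=
  (Sym2.map.injective Subtype.val_injective).extend_apply _ _ e

open Classical in
lemma dominatedColouring_of_notMem (hv : v ∉ D) :
    dominatedColouring D Z c s(v, w) = if w ∉ D then 2 else if s(v, w) ∈ Z then 0 else 1 := by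
  have hrange : ¬ ∃ e : Sym2 D, e.map (↑) = s(v, w) := by
    rintro ⟨e, he⟩
    obtain ⟨x, -, hx⟩ := Sym2.mem_map.1 (he ▸ Sym2.mem_mk_left v w)
    exact hv (hx ▸ x.2)
  rw [dominatedColouring, Function.extend_apply' _ _ _ hrange]
  simp [hv]

lemma dominatedColouring_lt_of_notMem (hv : v ∉ D) : dominatedColouring D Z c s(v, w) < 3 := by
  rw [dominatedColouring_of_notMem hv]
  split_ifs <;> simp

lemma dominatedColouring_lt {n : ℕ} (hc : ∀ e ∈ (G.induce D).edgeSet, c e < n) :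
    ∀ e ∈ G.edgeSet, dominatedColouring D Z c e < n + 3 := by
  intro e he
  induction e with | _ u v
  by_cases hu : u ∈ D
  · by_cases hv : v ∈ D
    · have := hc s(⟨u, hu⟩, ⟨v, hv⟩) he
      have := dominatedColouring_map (Z := Z) (c := c) s(⟨u, hu⟩, ⟨v, hv⟩)
      simp only [Sym2.map_mk] at this
      lia
    · rw [Sym2.eq_swap]
      exact (dominatedColouring_lt_of_notMem hv).trans_le le_add_self
  · exact (dominatedColouring_lt_of_notMem hu).trans_le le_add_self

lemma rainbowReachable_dominatedColouring (hc : RainbowConnectedUnder (G.induce D) c)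
    (hu : u ∈ D) (hv : v ∈ D) : RainbowReachable G (dominatedColouring D Z c) (Ici 3) u v := by
  refine ((hc.rainbowReachable ⟨u, hu⟩ ⟨v, hv⟩).map (Embedding.induce D).toHom
    (add_left_injective 3) dominatedColouring_map).mono ?_
  rintro _ ⟨k, -, rfl⟩
  exact Nat.le_add_left 3 k

lemma exists_rainbowReachable_two_ways {u' : V} (hv : v ∉ D) (hu : u ∈ D) (hw : w ∉ D)
    (hu' : u' ∈ D) (hvu : G.Adj v u) (hvw : v = w ∨ G.Adj v w) (hwu' : G.Adj w u')
    (hZ : s(v, u) ∈ Z ↔ s(w, u') ∉ Z) :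
    ∃ i ∈ Iio 3, (∃ d ∈ D, RainbowReachable G (dominatedColouring D Z c) {i} v d) ∧
      ∃ d ∈ D, RainbowReachable G (dominatedColouring D Z c) (Iio 3 \ {i}) v d := by
  classical
  set c' := dominatedColouring D Z c
  have hcu : c' s(v, u) = if s(v, u) ∈ Z then 0 else 1 := by
    simp [c', dominatedColouring_of_notMem hv, hu]
  have hcu' : c' s(w, u') = if s(w, u') ∈ Z then 0 else 1 := by
    simp [c', dominatedColouring_of_notMem hw, hu']
  have hcw : c' s(v, w) = 2 := by simp [c', dominatedColouring_of_notMem hv, hw]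
  have hne : c' s(w, u') ≠ c' s(v, u) := by
    rw [hcu, hcu', if_congr hZ rfl rfl]
    split_ifs <;> simp
  have hu'mem : c' s(w, u') ∈ Iio 3 \ {c' s(v, u)} :=
    ⟨dominatedColouring_lt_of_notMem hw, hne⟩
  refine ⟨c' s(v, u), dominatedColouring_lt_of_notMem hv, ⟨u, hu, .of_adj hvu rfl⟩, u', hu', ?_⟩
  obtain rfl | hvw := hvw
  · exact .of_adj hwu' hu'mem
  · have hwmem : c' s(v, w) ∈ Iio 3 \ {c' s(v, u)} := by grind
    have hdisj : Disjoint ({c' s(v, w)} : Set ℕ) {c' s(w, u')} := by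
      rw [disjoint_singleton]
      grind
    exact ((RainbowReachable.of_adj hvw (mem_singleton _)).trans
      (.of_adj hwu' (mem_singleton _)) hdisj).mono
        (union_subset (singleton_subset_iff.2 hwmem) (singleton_subset_iff.2 hu'mem))

end dominatedColouring

theorem RainbowColorable.of_induce {n : ℕ} (hD : IsDominatingSet G D)
    (hnbr : ∀ v ∉ D, (G.neighborSet v).Nontrivial) (h : RainbowColorable (G.induce D) n) :
    RainbowColorable G (n + 3) := by
  obtain ⟨c, hcn, hc⟩ := h
  obtain ⟨Z, hZ⟩ := hD.exists_two_way_edges hnbr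
  refine ⟨dominatedColouring D Z c, dominatedColouring_lt hcn,
    rainbowConnectedUnder_of_reachable_two_ways (D := D) (S := Iio 3) (T := Ici 3)
      (Iio_disjoint_Ici le_rfl)
      (fun u hu v hv => rainbowReachable_dominatedColouring hc hu hv) fun v => ?_⟩
  by_cases hv : v ∈ D
  · exact ⟨0, by simp, ⟨v, hv, .refl v⟩, v, hv, .refl v⟩
  · obtain ⟨u, hu, w, hw, u', hu', hvu, hvw, hwu', hvZ⟩ := hZ v hv
    exact exists_rainbowReachable_two_ways hv hu hw hu' hvu hvw hwu' hvZ

lemma exists_ncard_eq_connDomNum (hG : G.Connected) :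
    ∃ D : Set V, D.ncard = connDomNum G ∧ IsDominatingSet G D ∧ (G.induce D).Connected :=
  Nat.sInf_mem (s := {n | ∃ D : Set V, D.ncard = n ∧ IsDominatingSet G D ∧
      (G.induce D).Connected})
    ⟨_, univ, rfl, fun v => .inl (mem_univ v), (induceUnivIso G).connected_iff.2 hG⟩

theorem rc_le_connDomNum_add_two [Finite V] (hG : G.Connected) (hδ : ∀ v, 2 ≤ deg G v) :
    rc G ≤ connDomNum G + 2 := by
  obtain ⟨D, hcard, hdom, hconn⟩ := exists_ncard_eq_connDomNum hG
  have hnbr : ∀ v ∉ D, (G.neighborSet v).Nontrivial :=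
    fun v _ => one_lt_ncard_iff_nontrivial.1 (hδ v)
  have hpos : 0 < D.ncard := (ncard_pos).2 (nonempty_coe_sort.1 hconn.nonempty)
  have hrc := (RainbowColorable.of_induce hdom hnbr (rainbowColorable_card_sub_one hconn)).rc_le
  rw [Nat.card_coe_set_eq] at hrc
  lia

lemma connDomNum_le_length_add_one {x y : V} (q : G.Walk x y)
    (hq : IsDominatingSet G {w | w ∈ q.support}) : connDomNum G ≤ q.length + 1 := by
  classical
  calc connDomNum G ≤ {w | w ∈ q.support}.ncard :=
        Nat.sInf_le ⟨_, rfl, hq, q.connected_induce_support⟩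
    _ = q.support.toFinset.card := by rw [← List.coe_toFinset, ncard_coe_finset]
    _ ≤ q.support.length := List.toFinset_card_le _
    _ = q.length + 1 := q.length_support

end DominatingSet

section IntervalGraph

variable {V : Type*} {G : SimpleGraph V}

lemma IsIntervalGraph.exists_adj_iff (h : IsIntervalGraph G) :
    ∃ a b : V → ℝ, (∀ v, a v ≤ b v) ∧
      ∀ u v, u ≠ v → (G.Adj u v ↔ a u ≤ b v ∧ a v ≤ b u) := by
  obtain ⟨a, b, hab, hadj⟩ := h
  refine ⟨a, b, hab, fun u v huv => ?_⟩
  rw [hadj u v huv, Icc_inter_Icc, nonempty_Icc]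
  simp [hab, and_comm]

lemma exists_mem_support_overlap {a b : V → ℝ} (hadj : ∀ u v, G.Adj u v → a v ≤ b u) {w : V}
    (hw : a w ≤ b w) {x y : V} (q : G.Walk x y) (hx : a x ≤ b w) (hy : a w ≤ b y) :
    ∃ z ∈ q.support, a z ≤ b w ∧ a w ≤ b z := by
  induction q with
  | nil => exact ⟨_, Walk.start_mem_support _, hx, hy⟩
  | @cons x x' y h q ih =>
    by_cases hwx : a w ≤ b x
    · exact ⟨x, Walk.start_mem_support _, hx, hwx⟩
    · have hx' : a x' ≤ b w := ((hadj x x' h).trans (not_le.1 hwx).le).trans hw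
      obtain ⟨z, hz, hzw⟩ := ih hx' hy
      exact ⟨z, List.mem_cons_of_mem _ hz, hzw⟩

theorem IsIntervalGraph.connDomNum_lt_graphDiam [Finite V] (hint : IsIntervalGraph G)
    (hG : G.Connected) (hne : G ≠ ⊤) : connDomNum G < graphDiam G := by
  obtain ⟨a, b, hab, hadj⟩ := hint.exists_adj_iff
  have hle (x y : V) (h : G.Adj x y) : a y ≤ b x := ((hadj x y h.ne).1 h).2
  have := hG.nonempty
  obtain ⟨u, hu⟩ := Finite.exists_min b
  obtain ⟨v, hv⟩ := Finite.exists_max a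
  have huv : b u < a v := by
    contrapose! hne
    refine eq_top_iff.2 fun x y hxy => (hadj x y hxy).2 ⟨?_, ?_⟩
    exacts [(hv x).trans (hne.trans (hu y)), (hv y).trans (hne.trans (hu x))]
  obtain ⟨p, hp⟩ := hG.exists_walk_length_eq_dist u v
  have hlength : 1 < p.length := hp ▸ hG.one_lt_dist_of_ne_of_not_adj
    (fun h => (hab u).not_gt (h ▸ huv)) fun h => (hle u v h).not_gt huv
  have hfirst : G.Adj u p.snd := p.adj_snd (by rw [← Walk.length_eq_zero_iff]; lia)
  have hlast : G.Adj p.tail.penultimate v :=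
    p.tail.adj_penultimate (by rw [← Walk.length_eq_zero_iff, Walk.length_tail]; lia)
  have hdom : IsDominatingSet G {w | w ∈ p.tail.dropLast.support} := fun w => by
    obtain ⟨z, hz, hzw, hwz⟩ := exists_mem_support_overlap hle (hab w) p.tail.dropLast
      ((hle _ _ hfirst).trans (hu w)) ((hv w).trans (hle _ _ hlast))
    obtain rfl | hne := eq_or_ne z w
    · exact .inl hz
    · exact .inr ⟨z, hz, (hadj z w hne).2 ⟨hzw, hwz⟩⟩
  have hcard := connDomNum_le_length_add_one p.tail.dropLast hdom
  rw [Walk.length_dropLast, Walk.length_tail] at hcard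
  have := dist_le_graphDiam (G := G) u v
  lia

end IntervalGraph

/-- For a finite connected interval graph `G` with minimum degree at
least 2, `diam(G) ≤ rc(G) ≤ diam(G) + 1`. -/
theorem stmt_3 {V : Type*} [Fintype V] (G : SimpleGraph V) (hG : G.Connected)
    (hint : IsIntervalGraph G) (hδ : ∀ v : V, 2 ≤ deg G v) :
    graphDiam G ≤ rc G ∧ rc G ≤ graphDiam G + 1 := by
  refine ⟨graphDiam_le_rc hG, ?_⟩
  obtain rfl | hne := eq_or_ne G ⊤
  · exact rainbowColorable_top_one.rc_le.trans le_add_self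
  · calc rc G ≤ connDomNum G + 2 := rc_le_connDomNum_add_two hG hδ
      _ ≤ graphDiam G + 1 := Nat.succ_le_succ (hint.connDomNum_lt_graphDiam hG hne)
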